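/- arXiv:0805.2338 — 3 statements merged into one kernel-verified Lean document; each statement's English description precedes it below -/
import Mathlib

section
/- Let f, h ∈ K(x₁,…,xₙ) and f', h' ∈ K(y₁,…,yₘ) be non-constant rational functions. Then the following are equivalent: (A) there exists g ∈ K(t) with f = g∘h and f' = g∘h'; (B) h − h' divides f − f' in the ring K(x₁,…,xₙ) ⊗_K K(y₁,…,yₘ). -/
open MvPolynomial TensorProduct

/-- Substitution of an element `a` of a field extension of `K` into a univariate
rational function `g ∈ K(t)` (the composition `g ∘ a`). -/
noncomputable def ratEval {K : Type*} [Field K] {L : Type*} [Field L] [Algebra K L]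
    (g : RatFunc K) (a : L) : L :=
  Polynomial.aeval a g.num / Polynomial.aeval a g.denom

/-!
Substituting the transcendental elements `h` and `h'` for `t` makes `K(x)` and `K(y)` extensions
of one field `F = K(t)`, and (A) says that `f` and `f'` come from the same element of `F`.
Over a field, this is equivalent to `f ⊗ 1 = 1 ⊗ f'` in `K(x) ⊗_F K(y)`.
If `h − h'` divides `f − f'` over `K`, the latter equation holds, because `h` and `h'` are the
images of `t`. Conversely, modulo `h − h'` the two embeddings of `F` into `K(x) ⊗_K K(y)` agree
at `t`, which generates `F` over `K`, hence they agree on all of `F`.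
-/

section SimpleExtension

theorem algHom_ext_of_intermediateField_adjoin_eq_top {K F A : Type*} [Field K] [Field F]
    [Semiring A] [Algebra K F] [Algebra K A] {s : Set F}
    (hs : IntermediateField.adjoin K s = ⊤) {φ ψ : F →ₐ[K] A} (h : Set.EqOn φ ψ s) : φ = ψ := by
  ext x
  have hx : x ∈ IntermediateField.adjoin K s := hs ▸ IntermediateField.mem_top
  have comp_val_eq : φ.comp (IntermediateField.adjoin K s).val =
      ψ.comp (IntermediateField.adjoin K s).val :=
    IntermediateField.adjoin_algHom_ext K fun _ hy ↦ h hy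
  exact DFunLike.congr_fun comp_val_eq ⟨x, hx⟩

variable {F A B : Type*} [Field F] [CommRing A] [CommRing B] [Algebra F A] [Algebra F B]

theorem exists_algebraMap_eq_of_tmul_one_eq_one_tmul [Nontrivial A] [Nontrivial B] {a : A} {b : B}
    (hab : a ⊗ₜ[F] (1 : B) = (1 : A) ⊗ₜ[F] b) :
    ∃ g : F, algebraMap F A g = a ∧ algebraMap F B g = b := by
  have mem_inf : a ⊗ₜ[F] (1 : B) ∈
      (Algebra.TensorProduct.includeLeft : A →ₐ[F] A ⊗[F] B).range ⊓
        (Algebra.TensorProduct.includeRight : B →ₐ[F] A ⊗[F] B).range :=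
    ⟨⟨a, rfl⟩, ⟨b, hab.symm⟩⟩
  rw [(Subalgebra.LinearDisjoint.include_range F A B).inf_eq_bot] at mem_inf
  obtain ⟨g, hg⟩ := Algebra.mem_bot.mp mem_inf
  refine ⟨g, ?_, ?_⟩
  · apply Algebra.TensorProduct.includeLeft_injective (R := F) (S := F) (B := B)
      (algebraMap F B).injective
    simpa using hg
  · apply Algebra.TensorProduct.includeRight_injective (R := F) (A := A)
      (algebraMap F A).injective
    simpa [hab] using hg

theorem exists_algebraMap_eq_of_dvd {R : Type*} [CommRing R] [Algebra R F] [Algebra R A]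
    [Algebra R B] [IsScalarTower R F A] [IsScalarTower R F B] [Nontrivial A] [Nontrivial B]
    (θ : F) {a : A} {b : B}
    (hdvd : (algebraMap F A θ ⊗ₜ[R] (1 : B) - (1 : A) ⊗ₜ[R] algebraMap F B θ) ∣
      (a ⊗ₜ[R] (1 : B) - (1 : A) ⊗ₜ[R] b)) :
    ∃ g : F, algebraMap F A g = a ∧ algebraMap F B g = b := by
  apply exists_algebraMap_eq_of_tmul_one_eq_one_tmul
  have hdvd_F := map_dvd (Algebra.TensorProduct.mapOfCompatibleSMul F R R A B) hdvd
  have divisor_eq_zero :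
      algebraMap F A θ ⊗ₜ[F] (1 : B) - (1 : A) ⊗ₜ[F] algebraMap F B θ = 0 :=
    sub_eq_zero.mpr (Algebra.TensorProduct.tmul_one_eq_one_tmul θ)
  simpa only [map_sub, Algebra.TensorProduct.mapOfCompatibleSMul_tmul, divisor_eq_zero,
    zero_dvd_iff, sub_eq_zero] using hdvd_F

variable {K : Type*} [Field K] [Algebra K F] [Algebra K A] [Algebra K B]
  [IsScalarTower K F A] [IsScalarTower K F B]

theorem algebraMap_tmul_one_sub_one_tmul_dvd {θ : F}
    (hθ : IntermediateField.adjoin K {θ} = ⊤) (g : F) :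
    (algebraMap F A θ ⊗ₜ[K] (1 : B) - (1 : A) ⊗ₜ[K] algebraMap F B θ) ∣
      (algebraMap F A g ⊗ₜ[K] (1 : B) - (1 : A) ⊗ₜ[K] algebraMap F B g) := by
  let d := algebraMap F A θ ⊗ₜ[K] (1 : B) - (1 : A) ⊗ₜ[K] algebraMap F B θ
  let π : A ⊗[K] B →ₐ[K] (A ⊗[K] B) ⧸ Ideal.span {d} := Ideal.Quotient.mkₐ K (Ideal.span {d})
  let ι_A : F →ₐ[K] A ⊗[K] B :=
    Algebra.TensorProduct.includeLeft.comp (IsScalarTower.toAlgHom K F A)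
  let ι_B : F →ₐ[K] A ⊗[K] B :=
    Algebra.TensorProduct.includeRight.comp (IsScalarTower.toAlgHom K F B)
  have agree_at_θ : π (ι_A θ) = π (ι_B θ) :=
    Ideal.Quotient.eq.mpr (Ideal.mem_span_singleton_self d)
  have agree : π.comp ι_A = π.comp ι_B :=
    algHom_ext_of_intermediateField_adjoin_eq_top hθ (by simpa using agree_at_θ)
  exact Ideal.mem_span_singleton.mp (Ideal.Quotient.eq.mp (DFunLike.congr_fun agree g))

theorem exists_algebraMap_eq_iff_dvd [Nontrivial A] [Nontrivial B] {θ : F}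
    (hθ : IntermediateField.adjoin K {θ} = ⊤) {a : A} {b : B} :
    (∃ g : F, algebraMap F A g = a ∧ algebraMap F B g = b) ↔
      (algebraMap F A θ ⊗ₜ[K] (1 : B) - (1 : A) ⊗ₜ[K] algebraMap F B θ) ∣
        (a ⊗ₜ[K] (1 : B) - (1 : A) ⊗ₜ[K] b) := by
  refine ⟨?_, exists_algebraMap_eq_of_dvd θ⟩
  rintro ⟨g, rfl, rfl⟩
  exact algebraMap_tmul_one_sub_one_tmul_dvd hθ g

end SimpleExtension

section Substitution

variable {K L : Type*} [Field K] [Field L] [Algebra K L]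

theorem ratEval_X (a : L) : ratEval (RatFunc.X : RatFunc K) a = a := by
  simp [ratEval]

/-- Substitution of a transcendental element `a` into rational functions, as an embedding of
`K(t)` over `K`. Transcendence keeps the denominators away from zero, so that `ratEval` at `a`
takes no junk values and respects sums and products. -/
noncomputable def ratEvalAlgHom {a : L} (ha : Transcendental K a) : RatFunc K →ₐ[K] L :=
  (IntermediateField.adjoin K {a}).val.comp (RatFunc.algEquivOfTranscendental a ha).toAlgHom

theorem ratEvalAlgHom_apply {a : L} (ha : Transcendental K a) (g : RatFunc K) :
    ratEvalAlgHom ha g = ratEval g a := by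
  simp [ratEvalAlgHom, ratEval, RatFunc.algEquivOfTranscendental_apply]

end Substitution

section ConstantField

theorem isIntegrallyClosedIn_trans (R A B : Type*) [CommRing R] [CommRing A] [CommRing B]
    [Algebra R A] [Algebra A B] [Algebra R B] [IsScalarTower R A B]
    [IsIntegrallyClosedIn R A] [IsIntegrallyClosedIn A B] : IsIntegrallyClosedIn R B := by
  have inj_A : Function.Injective (algebraMap R A) := IsIntegralClosure.algebraMap_injective R R A
  have inj_B : Function.Injective (algebraMap A B) := IsIntegralClosure.algebraMap_injective A A B
  refine isIntegrallyClosedIn_iff.mpr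
    ⟨IsScalarTower.algebraMap_eq R A B ▸ inj_B.comp inj_A, fun {b} hb ↦ ?_⟩
  obtain ⟨a, rfl⟩ := IsIntegrallyClosedIn.algebraMap_eq_of_integral (hb.tower_top (A := A))
  obtain ⟨r, rfl⟩ := IsIntegrallyClosedIn.algebraMap_eq_of_integral
    ((isIntegral_algebraMap_iff inj_B).mp hb)
  exact ⟨r, IsScalarTower.algebraMap_apply R A B r⟩

variable {K : Type*} [Field K]

theorem transcendental_of_notMem_range_algebraMap {A : Type*} [CommRing A] [Algebra K A]
    [IsIntegrallyClosedIn K A] {a : A} (ha : a ∉ Set.range (algebraMap K A)) :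
    Transcendental K a :=
  fun h_alg ↦ ha (IsIntegrallyClosedIn.algebraMap_eq_of_integral h_alg.isIntegral)

variable (K) (σ : Type*)

instance isIntegrallyClosedIn_mvPolynomial : IsIntegrallyClosedIn K (MvPolynomial σ K) := by
  refine isIntegrallyClosedIn_iff.mpr ⟨C_injective σ K, fun {p} hp ↦ ?_⟩
  rcases eq_or_ne p 0 with rfl | p_ne_zero
  · exact ⟨0, map_zero _⟩
  · obtain ⟨r, -, rfl⟩ := isUnit_iff_eq_C_of_isReduced.mp (hp.isUnit p_ne_zero)
    exact ⟨r, rfl⟩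

instance isIntegrallyClosedIn_fractionRing_mvPolynomial :
    IsIntegrallyClosedIn K (FractionRing (MvPolynomial σ K)) :=
  isIntegrallyClosedIn_trans K (MvPolynomial σ K) _

end ConstantField

theorem exists_common_left_component_iff_dvd_in_tensor_general
    {K L M : Type*} [Field K] [Field L] [Field M] [Algebra K L] [Algebra K M]
    (f : L) (f' : M) {h : L} {h' : M} (hh : Transcendental K h) (hh' : Transcendental K h') :
    (∃ g : RatFunc K, f = ratEval g h ∧ f' = ratEval g h') ↔
      (h ⊗ₜ[K] (1 : M) - (1 : L) ⊗ₜ[K] h') ∣ (f ⊗ₜ[K] (1 : M) - (1 : L) ⊗ₜ[K] f') := by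
  let : Algebra (RatFunc K) L := (ratEvalAlgHom hh).toAlgebra
  let : Algebra (RatFunc K) M := (ratEvalAlgHom hh').toAlgebra
  have : IsScalarTower K (RatFunc K) L := .of_algHom (ratEvalAlgHom hh)
  have : IsScalarTower K (RatFunc K) M := .of_algHom (ratEvalAlgHom hh')
  have algebraMap_L (g : RatFunc K) : algebraMap (RatFunc K) L g = ratEval g h :=
    ratEvalAlgHom_apply hh g
  have algebraMap_M (g : RatFunc K) : algebraMap (RatFunc K) M g = ratEval g h' :=
    ratEvalAlgHom_apply hh' g
  simpa only [algebraMap_L, algebraMap_M, ratEval_X, eq_comm (b := f), eq_comm (b := f')] using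
    exists_algebraMap_eq_iff_dvd (RatFunc.adjoin_X (K := K)) (a := f) (b := f')

/-- For non-constant `f, h ∈ K(x₁,…,xₙ)` and `f', h' ∈ K(y₁,…,yₘ)`,
there exists `g ∈ K(t)` with `f = g∘h` and `f' = g∘h'` if and only if
`h − h'` divides `f − f'` in `K(x) ⊗_K K(y)`. -/
theorem exists_common_left_component_iff_dvd_in_tensor
    {K : Type*} [Field K] {n m : ℕ}
    (f h : FractionRing (MvPolynomial (Fin n) K))
    (f' h' : FractionRing (MvPolynomial (Fin m) K))
    (hf : f ∉ Set.range (algebraMap K (FractionRing (MvPolynomial (Fin n) K))))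
    (hh : h ∉ Set.range (algebraMap K (FractionRing (MvPolynomial (Fin n) K))))
    (hf' : f' ∉ Set.range (algebraMap K (FractionRing (MvPolynomial (Fin m) K))))
    (hh' : h' ∉ Set.range (algebraMap K (FractionRing (MvPolynomial (Fin m) K)))) :
    (∃ g : RatFunc K, f = ratEval g h ∧ f' = ratEval g h') ↔
      ((h ⊗ₜ[K] 1 - 1 ⊗ₜ[K] h') ∣ (f ⊗ₜ[K] 1 - 1 ⊗ₜ[K] f') :
        Prop) := by
  exact exists_common_left_component_iff_dvd_in_tensor_general f f'
    (transcendental_of_notMem_range_algebraMap hh) (transcendental_of_notMem_range_algebraMap hh')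
end

section
/- Let f ∈ K(x₁,…,xₙ) be non-constant, with K(x)/K of transcendence degree n. The map sending an equivalence class [(g,h)] of uni-multivariate decompositions of f to the field K(h) is a bijection between equivalence classes of uni-multivariate decompositions of f and intermediate fields F with K(f) ⊆ F ⊆ K(x₁,…,xₙ) of transcendence degree 1 over K. -/
open MvPolynomial

/-- A field extension has transcendence degree one iff some single element forms a
transcendence basis. -/
def TrDegOne (K : Type*) (F : Type*) [Field K] [Field F] [Algebra K F] : Prop :=
  ∃ t : F, IsTranscendenceBasis K (fun _ : Unit => t)

/-!
Substituting `xᵢ ↦ t ^ wᵢ` with weights `w` that separate the finitely many monomials occurring in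
a non-constant `f` defines a ring homomorphism from `K[x]` to `K(t)`. It extends to the local ring
`O` at its kernel; `O` contains `f` and `f` maps to a non-constant of `K(t)`, so `f` is
transcendental over `K`. As `O` is integrally closed in `K(x)`, it contains every field algebraic
over `K(f)`. Hence every intermediate field of transcendence degree one embeds in `K(t)`,
where Lüroth's theorem makes it simple.

For `h` transcendental, `K(t) ≃ K(h)` by substitution, so `K(l(h)) = K(h)` iff `K(l) = K(t)`, which
says that `l` has degree one because `[K(t) : K(l)]` is the degree of `l`.
-/

open scoped IntermediateField Polynomial

section Weights

variable {σ : Type*}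

theorem eval_weight_X {R : Type*} [CommSemiring R] (x : σ → R) (u : σ →₀ ℕ) :
    eval x (Finsupp.weight X u) = Finsupp.weight x u := by
  simp [Finsupp.weight_apply, Finsupp.sum]

theorem weight_X_injective (R : Type*) [CommSemiring R] [CharZero R] :
    Function.Injective (Finsupp.weight (R := ℕ) (X : σ → MvPolynomial σ R)) := by
  classical
  intro u v huv
  ext i
  have := congrArg (eval (Pi.single i 1)) huv
  simpa [eval_weight_X, Finsupp.weight_single_index] using this

theorem exists_weight_injOn (S : Finset (σ →₀ ℕ)) :
    ∃ w : σ → ℕ, Set.InjOn (Finsupp.weight (R := ℕ) w) S := by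
  classical
  let P : MvPolynomial σ ℤ :=
    ∏ uv ∈ S.offDiag, (Finsupp.weight X uv.1 - Finsupp.weight X uv.2)
  have hP : P ≠ 0 := Finset.prod_ne_zero_iff.mpr fun uv huv =>
    sub_ne_zero.mpr ((weight_X_injective ℤ).ne (Finset.mem_offDiag.mp huv).2.2)
  obtain ⟨x, hx, hPx⟩ : ∃ x ∈ Set.univ.pi fun _ : σ => Set.range ((↑) : ℕ → ℤ), eval x P ≠ 0 := by
    contrapose! hP
    exact funext_set _ (fun _ => Set.infinite_range_of_injective Nat.cast_injective)
      fun x hx => by rw [hP x hx, map_zero]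
  choose w hw using fun i => hx i trivial
  have weight_x (u : σ →₀ ℕ) : Finsupp.weight x u = (Finsupp.weight w u : ℕ) := by
    simp [Finsupp.weight_apply, Finsupp.sum, hw]
  refine ⟨w, fun u hu v hv huv => by_contra fun hne => hPx ?_⟩
  rw [eval_prod]
  refine Finset.prod_eq_zero (i := (u, v)) (Finset.mem_offDiag.mpr ⟨hu, hv, hne⟩) ?_
  rw [map_sub, eval_weight_X, eval_weight_X, weight_x, weight_x, huv, sub_self]

theorem coeff_aeval_X_pow_weight {R : Type*} [CommSemiring R] {S : Set (σ →₀ ℕ)} {w : σ → ℕ}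
    (hw : Set.InjOn (Finsupp.weight (R := ℕ) w) S) {p : MvPolynomial σ R}
    (hp : ↑p.support ⊆ S) {u : σ →₀ ℕ} (hu : u ∈ S) :
    (aeval (fun i => (Polynomial.X : R[X]) ^ w i) p).coeff (Finsupp.weight w u) = coeff u p := by
  have prod_X_pow (v : σ →₀ ℕ) :
      ∏ i ∈ v.support, ((Polynomial.X : R[X]) ^ w i) ^ v i = Polynomial.X ^ Finsupp.weight w v := by
    simp [Finsupp.weight_apply, Finsupp.sum, ← pow_mul, mul_comm, Finset.prod_pow_eq_pow_sum]
  simp only [aeval_def, eval₂_eq, Polynomial.finsetSum_coeff, prod_X_pow, Polynomial.algebraMap_eq,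
    Polynomial.coeff_C_mul_X_pow]
  rw [Finset.sum_eq_single u, if_pos rfl]
  · exact fun v hv hvu => if_neg fun h => hvu (hw (hp hv) hu h.symm)
  · exact fun h => by rw [if_pos rfl, notMem_support_iff.mp h]

theorem exists_algHom_polynomial_injOn (R : Type*) [CommSemiring R] (S : Finset (σ →₀ ℕ)) :
    ∃ φ : MvPolynomial σ R →ₐ[R] R[X], Set.InjOn φ {p | p.support ⊆ S} := by
  obtain ⟨w, hw⟩ := exists_weight_injOn S
  refine ⟨aeval fun i => Polynomial.X ^ w i, fun p hp q hq hpq => ?_⟩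
  ext u
  by_cases hu : u ∈ S
  · rw [← coeff_aeval_X_pow_weight hw (Finset.coe_subset.mpr hp) hu, hpq,
      coeff_aeval_X_pow_weight hw (Finset.coe_subset.mpr hq) hu]
  · rw [notMem_support_iff.mp fun h => hu (hp h), notMem_support_iff.mp fun h => hu (hq h)]

end Weights

section Places

variable {K E F L : Type*} [Field K] [Field E] [Field F] [Field L]
  [Algebra K E] [Algebra K F] [Algebra K L]

theorem map_mem_of_mem_adjoin_simple {O : Subalgebra K L} (ψ : O →ₐ[K] E) [IsLocalHom ψ]
    (ι : F →ₐ[K] L) {t : F} {s : O} (hs : s = ι t) (ht : Transcendental K (ψ s)) {x : F}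
    (hx : x ∈ K⟮t⟯) : ι x ∈ O := by
  obtain ⟨P, Q, rfl⟩ := (IntermediateField.mem_adjoin_simple_iff K x).mp hx
  have map_aeval (R : K[X]) : ι (Polynomial.aeval t R) = (Polynomial.aeval s R : O) := by
    rw [← Polynomial.aeval_algHom_apply, ← hs, Subalgebra.aeval_coe]
  rcases eq_or_ne Q 0 with rfl | hQ
  · simp
  · have hψQ : ψ (Polynomial.aeval s Q) ≠ 0 := by
      rw [← Polynomial.aeval_algHom_apply]
      exact (transcendental_iff_injective.mp ht).ne_iff' (map_zero _) |>.mpr hQ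
    obtain ⟨u, hu⟩ := isUnit_of_map_unit ψ _ hψQ.isUnit
    have hinv : ((Polynomial.aeval s Q : O) : L)⁻¹ = (↑u⁻¹ : O) := by
      rw [← hu]
      refine inv_eq_of_mul_eq_one_right ?_
      rw [← MulMemClass.coe_mul, Units.mul_inv, OneMemClass.coe_one]
    rw [map_div₀, map_aeval, map_aeval, div_eq_mul_inv, hinv]
    exact mul_mem (SetLike.coe_mem _) (SetLike.coe_mem _)

theorem nonempty_algHom_of_isLocalHom {O : Subalgebra K L} [IsIntegrallyClosedIn O L]
    (ψ : O →ₐ[K] E) [IsLocalHom ψ] (ι : F →ₐ[K] L) {t : F} {s : O} (hs : s = ι t)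
    (ht : Transcendental K (ψ s)) [Algebra.IsAlgebraic K⟮t⟯ F] : Nonempty (F →ₐ[K] E) := by
  let ι₀ : K⟮t⟯ →+* O := (ι.comp K⟮t⟯.val).toRingHom.codRestrict O fun x =>
    map_mem_of_mem_adjoin_simple ψ ι hs ht x.2
  have map_mem (y : F) : ι y ∈ O := by
    have hy : IsIntegral O (ι y) := (Algebra.IsIntegral.isIntegral (R := K⟮t⟯) y).map_of_comp_eq
      ι₀ ι.toRingHom rfl
    obtain ⟨z, hz⟩ := IsIntegrallyClosedIn.isIntegral_iff.mp hy
    exact hz ▸ z.2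
  exact ⟨ψ.comp (ι.codRestrict O map_mem)⟩

theorem exists_isLocalHom_extending {A : Type*} [CommRing A] [IsDomain A] [IsIntegrallyClosed A]
    [Algebra K A] [Algebra A L] [IsScalarTower K A L] [IsFractionRing A L] (φ : A →ₐ[K] E) :
    ∃ (O : Subalgebra K L) (ψ : O →ₐ[K] E), IsIntegrallyClosedIn O L ∧ IsLocalHom ψ ∧
      ∀ p q, φ q ≠ 0 → ∃ s : O, s = algebraMap A L p / algebraMap A L q ∧ ψ s = φ p / φ q := by
  let P : Ideal A := RingHom.ker φ
  have : P.IsPrime := RingHom.ker_isPrime φ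
  have hP : P.primeCompl ≤ nonZeroDivisors A := P.primeCompl_le_nonZeroDivisors
  let O := Localization.subalgebra.ofField L P.primeCompl hP
  have : IsLocalization.AtPrime O P := Localization.subalgebra.isLocalization_ofField L _ hP
  have : IsIntegrallyClosed O := isIntegrallyClosed_of_isLocalization O P.primeCompl hP
  have isUnit_φ (a : P.primeCompl) : IsUnit (φ a) := isUnit_iff_ne_zero.mpr a.2
  let ψ : O →ₐ[K] E := IsLocalization.liftAlgHom (M := P.primeCompl) isUnit_φ
  have ψ_mk' (p : A) (q : P.primeCompl) : ψ (IsLocalization.mk' O p q) = φ p / φ q := by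
    rw [eq_div_iff (isUnit_φ q).ne_zero, mul_comm]
    exact ((IsLocalization.lift_mk'_spec (g := φ.toRingHom) isUnit_φ p _ q).mp rfl).symm
  have coe_mk' (p : A) (q : P.primeCompl) :
      (IsLocalization.mk' O p q : L) = algebraMap A L p / algebraMap A L q := by
    rw [eq_div_iff (IsFractionRing.to_map_ne_zero_of_mem_nonZeroDivisors (hP q.2))]
    exact congrArg Subtype.val (IsLocalization.mk'_spec O p q)
  have isLocalHom_ψ : IsLocalHom ψ := by
    refine ⟨fun s hs => ?_⟩
    obtain ⟨p, q, rfl⟩ := IsLocalization.exists_mk'_eq P.primeCompl s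
    rw [ψ_mk'] at hs
    exact (IsLocalization.AtPrime.isUnit_mk'_iff O P p q).mpr (div_ne_zero_iff.mp hs.ne_zero).1
  exact ⟨O.restrictScalars K, ψ, (isIntegrallyClosed_iff_isIntegrallyClosedIn (R := O) L).mp
    inferInstance, isLocalHom_ψ, fun p q hq => ⟨IsLocalization.mk' O p ⟨q, hq⟩, coe_mk' p _,
    ψ_mk' p _⟩⟩

end Places

section PurelyTranscendental

variable {K F L σ : Type*} [Field K] [Field F] [Field L] [Algebra K F] [Algebra K L]

theorem exists_isLocalHom_transcendental (f : FractionRing (MvPolynomial σ K))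
    (hf : f ∉ Set.range (algebraMap K (FractionRing (MvPolynomial σ K)))) :
    ∃ (O : Subalgebra K (FractionRing (MvPolynomial σ K))) (ψ : O →ₐ[K] RatFunc K),
      IsIntegrallyClosedIn O (FractionRing (MvPolynomial σ K)) ∧ IsLocalHom ψ ∧
      ∃ s : O, s = f ∧ Transcendental K (ψ s) := by
  classical
  obtain ⟨p, q, hq, rfl⟩ := IsFractionRing.div_surjective (A := MvPolynomial σ K) f
  obtain ⟨φ, hφ⟩ := exists_algHom_polynomial_injOn K (p.support ∪ q.support)
  let φ' : MvPolynomial σ K →ₐ[K] RatFunc K :=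
    (IsScalarTower.toAlgHom K K[X] (RatFunc K)).comp φ
  have hφ' : Set.InjOn φ' {r | r.support ⊆ p.support ∪ q.support} :=
    (RatFunc.algebraMap_injective K).comp_injOn hφ
  have hφq : φ' q ≠ 0 := fun h => nonZeroDivisors.ne_zero hq <|
    hφ' Finset.subset_union_right (by simp) (h.trans (map_zero φ').symm)
  obtain ⟨O, ψ, hO, hψ, lift⟩ :=
    exists_isLocalHom_extending (L := FractionRing (MvPolynomial σ K)) φ'
  obtain ⟨s, hs, hψs⟩ := lift p q hφq
  refine ⟨O, ψ, hO, hψ, s, hs, RatFunc.transcendental_of_ne_C _ ?_⟩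
  rintro ⟨c, hc⟩
  have hpq : p = c • q := by
    refine hφ' Finset.subset_union_left (support_smul.trans Finset.subset_union_right) ?_
    rw [map_smul, Algebra.smul_def, RatFunc.algebraMap_eq_C, ← hc, hψs, div_mul_cancel₀ _ hφq]
  refine hf ⟨c, ?_⟩
  rw [hpq, Algebra.smul_def, map_mul, ← IsScalarTower.algebraMap_apply,
    mul_div_cancel_right₀ _ (IsFractionRing.to_map_ne_zero_of_mem_nonZeroDivisors hq)]

theorem transcendental_of_notMem_range (ι : L →ₐ[K] FractionRing (MvPolynomial σ K)) {f : L}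
    (hf : f ∉ Set.range (algebraMap K L)) : Transcendental K f := by
  have hιf : ι f ∉ Set.range (algebraMap K (FractionRing (MvPolynomial σ K))) := by
    rintro ⟨c, hc⟩
    exact hf ⟨c, ι.injective ((ι.commutes c).trans hc)⟩
  obtain ⟨O, ψ, -, -, s, hs, hψs⟩ := exists_isLocalHom_transcendental (ι f) hιf
  have hs_transc : Transcendental K s := fun h => hψs (h.algHom ψ)
  have : Transcendental K (s : FractionRing (MvPolynomial σ K)) :=
    (transcendental_algebraMap_iff Subtype.val_injective).mpr hs_transc
  rw [hs] at this
  exact fun h => this (h.algHom ι)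

theorem TrDegOne.nonempty_algHom_ratFunc (hF : TrDegOne K F)
    (ι : F →ₐ[K] FractionRing (MvPolynomial σ K)) : Nonempty (F →ₐ[K] RatFunc K) := by
  obtain ⟨t, ht⟩ := hF
  have halg : Algebra.IsAlgebraic K⟮t⟯ F := by
    have := ht.isAlgebraic_field
    rwa [Set.range_const] at this
  have ht_transc : Transcendental K t := algebraicIndependent_unique_type_iff.mp ht.1
  have hιt : ι t ∉ Set.range (algebraMap K (FractionRing (MvPolynomial σ K))) := by
    rintro ⟨c, hc⟩
    exact ht_transc (ι.injective ((ι.commutes c).trans hc) ▸ isAlgebraic_algebraMap c)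
  obtain ⟨O, ψ, _, _, s, hs, hψs⟩ := exists_isLocalHom_transcendental (ι t) hιt
  exact nonempty_algHom_of_isLocalHom ψ ι hs hψs

theorem exists_adjoin_simple_eq_top_of_algHom_ratFunc (θ : F →ₐ[K] RatFunc K) :
    ∃ h : F, K⟮h⟯ = ⊤ := by
  obtain ⟨h, hh : θ h = _⟩ := RatFunc.Luroth.generator_mem (E := θ.fieldRange)
  refine ⟨h, IntermediateField.map_injective θ ?_⟩
  rw [IntermediateField.adjoin_map, Set.image_singleton, hh, ← RatFunc.Luroth.eq_adjoin_generator,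
    AlgHom.fieldRange_eq_map]

theorem TrDegOne.exists_adjoin_simple_eq {F : IntermediateField K L} (hF : TrDegOne K F)
    (ι : L →ₐ[K] FractionRing (MvPolynomial σ K)) : ∃ h : L, K⟮h⟯ = F := by
  obtain ⟨θ⟩ := hF.nonempty_algHom_ratFunc (ι.comp F.val)
  obtain ⟨h, hh⟩ := exists_adjoin_simple_eq_top_of_algHom_ratFunc θ
  exact ⟨h, by rw [← IntermediateField.lift_adjoin_simple, hh, IntermediateField.lift_top]⟩

end PurelyTranscendental

section Decompositions

variable {K L : Type*} [Field K] [Field L] [Algebra K L]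

theorem notMem_range_of_mem_adjoin_simple {f h : L} (hfh : f ∈ K⟮h⟯)
    (hf : f ∉ Set.range (algebraMap K L)) : h ∉ Set.range (algebraMap K L) := fun hh =>
  hf (IntermediateField.mem_bot.mp (IntermediateField.adjoin_simple_eq_bot_iff.mpr
    (IntermediateField.mem_bot.mpr hh) ▸ hfh))

theorem ratEval_mem_adjoin_simple (g : RatFunc K) (h : L) : ratEval g h ∈ K⟮h⟯ :=
  (IntermediateField.mem_adjoin_simple_iff K _).mpr ⟨_, _, rfl⟩

theorem exists_eq_ratEval_of_mem_adjoin_simple {f h : L} (hh : Transcendental K h)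
    (hfh : f ∈ K⟮h⟯) : ∃ g : RatFunc K, f = ratEval g h := by
  obtain ⟨g, hg⟩ := (RatFunc.algEquivOfTranscendental h hh).surjective ⟨f, hfh⟩
  exact ⟨g, by rw [ratEval, ← RatFunc.algEquivOfTranscendental_apply h hh, hg]⟩

theorem trDegOne_adjoin_simple {h : L} (hh : Transcendental K h) : TrDegOne K K⟮h⟯ := by
  have : Algebra.IsAlgebraic K[X] (RatFunc K) :=
    IsLocalization.isAlgebraic _ (nonZeroDivisors K[X])
  have isTranscendenceBasis_X := (IsTranscendenceBasis.polynomial Unit K).algebraMap_comp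
    (A := RatFunc K)
  exact ⟨_, (RatFunc.algEquivOfTranscendental h hh).isTranscendenceBasis isTranscendenceBasis_X⟩

theorem adjoin_ratEval_eq_adjoin_simple_iff {h : L} (hh : Transcendental K h) (l : RatFunc K) :
    K⟮ratEval l h⟯ = K⟮h⟯ ↔ max l.num.natDegree l.denom.natDegree = 1 := by
  let e := RatFunc.algEquivOfTranscendental h hh
  have lift_map_l : IntermediateField.lift (K⟮l⟯.map e.toAlgHom) = K⟮ratEval l h⟯ := by
    rw [IntermediateField.adjoin_map, Set.image_singleton, IntermediateField.lift_adjoin_simple]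
    exact congrArg (K⟮·⟯) (RatFunc.algEquivOfTranscendental_apply h hh l)
  rw [← RatFunc.finrank_eq_max_natDegree, IntermediateField.finrank_eq_one_iff_eq_top,
    ← (IntermediateField.map_injective e.toAlgHom).eq_iff,
    ← (IntermediateField.lift_injective K⟮h⟯).eq_iff, lift_map_l,
    ← AlgHom.fieldRange_eq_map, AlgEquiv.fieldRange_eq_top, IntermediateField.lift_top]

theorem adjoin_simple_eq_iff_exists_ratEval {h h' : L} (hh' : Transcendental K h') :
    K⟮h⟯ = K⟮h'⟯ ↔
      ∃ l : RatFunc K, max l.num.natDegree l.denom.natDegree = 1 ∧ h = ratEval l h' := by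
  constructor
  · intro heq
    obtain ⟨l, rfl⟩ := exists_eq_ratEval_of_mem_adjoin_simple hh'
      (heq ▸ IntermediateField.mem_adjoin_simple_self K h)
    exact ⟨l, (adjoin_ratEval_eq_adjoin_simple_iff hh' l).mp heq, rfl⟩
  · rintro ⟨l, hl, rfl⟩
    exact (adjoin_ratEval_eq_adjoin_simple_iff hh' l).mpr hl

end Decompositions

theorem decompositions_biject_with_intermediate_fields_general
    {K L σ : Type*} [Field K] [Field L] [Algebra K L]
    (ι : L →ₐ[K] FractionRing (MvPolynomial σ K)) (f : L)
    (hf : f ∉ Set.range (algebraMap K L)) :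
    (∀ (g : RatFunc K) (h : L), f = ratEval g h → K⟮f⟯ ≤ K⟮h⟯ ∧ TrDegOne K K⟮h⟯) ∧
    (∀ F : IntermediateField K L, K⟮f⟯ ≤ F → TrDegOne K F →
        ∃ (g : RatFunc K) (h : L), f = ratEval g h ∧ K⟮h⟯ = F) ∧
    (∀ (g g' : RatFunc K) (h h' : L), f = ratEval g h → f = ratEval g' h' →
        (K⟮h⟯ = K⟮h'⟯ ↔
          ∃ l : RatFunc K, max l.num.natDegree l.denom.natDegree = 1 ∧ h = ratEval l h')) := by
  have transcendental_of_mem {h : L} (hfh : f ∈ K⟮h⟯) : Transcendental K h :=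
    transcendental_of_notMem_range ι (notMem_range_of_mem_adjoin_simple hfh hf)
  have mem_of_eq {g : RatFunc K} {h : L} (hgh : f = ratEval g h) : f ∈ K⟮h⟯ :=
    hgh ▸ ratEval_mem_adjoin_simple g h
  simp only [IntermediateField.adjoin_simple_le_iff]
  refine ⟨fun g h hgh => ⟨mem_of_eq hgh, ?_⟩, fun F hfF hF => ?_, fun g g' h h' _ hgh' => ?_⟩
  · exact trDegOne_adjoin_simple (transcendental_of_mem (mem_of_eq hgh))
  · obtain ⟨h, rfl⟩ := hF.exists_adjoin_simple_eq ι
    obtain ⟨g, hgh⟩ := exists_eq_ratEval_of_mem_adjoin_simple (transcendental_of_mem hfF) hfF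
    exact ⟨g, h, hgh, rfl⟩
  · exact adjoin_simple_eq_iff_exists_ratEval (transcendental_of_mem (mem_of_eq hgh'))

/-- For non-constant `f ∈ K(x₁,…,xₙ)`, the map `[(g,h)] ↦ K(h)` is a
bijection between equivalence classes of uni-multivariate decompositions of `f` and
the intermediate fields `K(f) ⊆ F ⊆ K(x₁,…,xₙ)` of transcendence degree 1 over `K`:
(a) every decomposition `(g,h)` yields such an intermediate field `K(h)`;
(b) the map is surjective onto these fields;
(c) two decompositions map to the same field iff they are equivalent. -/
theorem decompositions_biject_with_intermediate_fields
    {K : Type*} [Field K] {n : ℕ}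
    (f : FractionRing (MvPolynomial (Fin n) K))
    (hf : f ∉ Set.range (algebraMap K (FractionRing (MvPolynomial (Fin n) K)))) :
    (∀ (g : RatFunc K) (h : FractionRing (MvPolynomial (Fin n) K)), f = ratEval g h →
        IntermediateField.adjoin K {f} ≤ IntermediateField.adjoin K {h} ∧
        TrDegOne K (IntermediateField.adjoin K {h})) ∧
    (∀ F : IntermediateField K (FractionRing (MvPolynomial (Fin n) K)),
        IntermediateField.adjoin K {f} ≤ F → TrDegOne K F →
        ∃ (g : RatFunc K) (h : FractionRing (MvPolynomial (Fin n) K)),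
          f = ratEval g h ∧ IntermediateField.adjoin K {h} = F) ∧
    (∀ (g g' : RatFunc K) (h h' : FractionRing (MvPolynomial (Fin n) K)),
        f = ratEval g h → f = ratEval g' h' →
        (IntermediateField.adjoin K {h} = IntermediateField.adjoin K {h'} ↔
          ∃ l : RatFunc K, max l.num.natDegree l.denom.natDegree = 1 ∧ h = ratEval l h')) :=
  decompositions_biject_with_intermediate_fields_general (AlgHom.id K _) f hf
end

section
/- Let K ⊆ F ⊆ K(x₁,…,xₙ) with tr.deg(F/K) = 1. If F contains a non-constant polynomial p ∈ K[x₁,…,xₙ], then F is generated over K by a polynomial: there exists q ∈ K[x₁,…,xₙ] with F = K(q). -/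
open MvPolynomial

/-!
Let `R = K[x₁, …, xₙ]`. A substitution `ψ : R → K[T]` sending `p` to a non-constant polynomial is
injective on `K[p]`. Every element of `F` is algebraic over `K[p]`, and `R` is integrally closed, so
it is a quotient `r / a` with `r ∈ R` and `0 ≠ a ∈ K[p]`; hence `ψ` extends to an embedding
`F → K(T)`, and Lüroth's theorem gives `F = K(f)`. Pull the place at infinity of `K(T)` back to `F`.
Its residue field is `K`, so after a Möbius transformation both `f` and `p` have a pole there.
Writing `p = A(f) / B(f)`, this forces `deg B < deg A`, which makes `f` a root of
`A(Y) - p B(Y)`, monic up to a constant. So `f` is integral over `R`, that is, `f ∈ R`.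
-/

open scoped Polynomial IntermediateField

lemma isIntegral_of_algebraMap_mul_aeval_eq_aeval {K R S : Type*} [Field K] [CommRing R]
    [CommRing S] [Algebra K R] [Algebra K S] [Algebra R S] [IsScalarTower K R S] {A B : K[X]}
    (hBA : B.degree < A.degree) {p : R} {f : S}
    (h : algebraMap R S p * Polynomial.aeval f B = Polynomial.aeval f A) : IsIntegral R f := by
  nontriviality R
  set Q : R[X] := A.map (algebraMap K R) - Polynomial.C p * B.map (algebraMap K R) with hQ
  have hroot : Polynomial.aeval f Q = 0 := by simp [hQ, ← h]
  have hdeg : (Polynomial.C p * B.map (algebraMap K R)).degree <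
      (A.map (algebraMap K R)).degree := by
    rw [← Polynomial.smul_eq_C_mul]
    refine (Polynomial.degree_smul_le _ _).trans_lt ?_
    rwa [Polynomial.degree_map, Polynomial.degree_map]
  have hlead : Q.leadingCoeff = algebraMap K R A.leadingCoeff := by
    rw [hQ, Polynomial.leadingCoeff_sub_of_degree_lt hdeg, Polynomial.leadingCoeff_map]
  have hA : A.leadingCoeff ≠ 0 :=
    Polynomial.leadingCoeff_ne_zero.mpr (Polynomial.ne_zero_of_degree_gt hBA)
  have hint : IsIntegral R (A.leadingCoeff • f) := by
    simpa [hlead] using isIntegral_leadingCoeff_smul Q f hroot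
  simpa [hA] using hint.smul A.leadingCoeff⁻¹

lemma exists_algebraMap_eq_smul_of_isAlgebraic {A R L : Type*} [CommRing A] [CommRing R]
    [IsIntegrallyClosed R] [CommRing L] [Algebra A R] [Algebra A L] [Algebra R L]
    [IsScalarTower A R L] [IsFractionRing R L] {x : L} (hx : IsAlgebraic A x) :
    ∃ a : A, a ≠ 0 ∧ ∃ r : R, algebraMap R L r = a • x := by
  obtain ⟨a, ha, hint⟩ := hx.exists_integral_multiple
  exact ⟨a, ha, IsIntegrallyClosed.isIntegral_iff.mp (hint.tower_top (A := R))⟩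

lemma exists_algHom_extending_of_isAlgebraic {K A R L M : Type*} [CommRing K] [CommRing A]
    [CommRing R] [IsDomain R] [IsIntegrallyClosed R] [Field L] [Field M] [Algebra K R]
    [Algebra K L] [Algebra K M] [Algebra A R] [Algebra A L] [Algebra R L] [IsScalarTower K R L]
    [IsScalarTower A R L] [IsFractionRing R L] (F : Subalgebra K L)
    (hF : ∀ x ∈ F, IsAlgebraic A x) (ψ : R →ₐ[K] M)
    (hψ : ∀ a : A, ψ (algebraMap A R a) = 0 → a = 0) :
    ∃ φ : F →ₐ[K] M, ∀ (r : R) (hr : algebraMap R L r ∈ F), φ ⟨algebraMap R L r, hr⟩ = ψ r := by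
  have : (RingHom.ker ψ).IsPrime := RingHom.ker_isPrime ψ
  let S := Localization.subalgebra.ofField L (RingHom.ker ψ).primeCompl
    (Ideal.primeCompl_le_nonZeroDivisors _)
  have hS : IsLocalization (RingHom.ker ψ).primeCompl S := inferInstance
  have hFS : F ≤ S.restrictScalars K := fun x hx ↦ by
    obtain ⟨a, ha, r, hr⟩ := exists_algebraMap_eq_smul_of_isAlgebraic (R := R) (hF x hx)
    have haψ : algebraMap A R a ∈ (RingHom.ker ψ).primeCompl := fun h ↦ ha (hψ a h)
    have ha0 : algebraMap A L a ≠ 0 := by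
      rw [IsScalarTower.algebraMap_apply A R L]
      exact IsFractionRing.to_map_ne_zero_of_mem_nonZeroDivisors
        (Ideal.primeCompl_le_nonZeroDivisors _ haψ)
    refine ⟨r, algebraMap A R a, haψ, ?_⟩
    rw [hr, ← IsScalarTower.algebraMap_apply, Algebra.smul_def, mul_comm, inv_mul_cancel_left₀ ha0]
  have hunit (s : (RingHom.ker ψ).primeCompl) : IsUnit (ψ s) := isUnit_iff_ne_zero.mpr s.2
  obtain ⟨φ, hφ⟩ : ∃ φ : S →ₐ[K] M, ∀ r : R, φ (algebraMap R S r) = ψ r :=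
    ⟨IsLocalization.liftAlgHom (M := (RingHom.ker ψ).primeCompl) (S := S) (f := ψ) hunit,
      fun r ↦ IsLocalization.lift_eq hunit r⟩
  let ι : F →ₐ[K] S.restrictScalars K := Subalgebra.inclusion hFS
  exact ⟨AlgHom.comp φ ι, fun r _ ↦ hφ r⟩

lemma TrDegOne.isAlgebraic_adjoin {K F : Type*} [Field K] [Field F] [Algebra K F]
    (hF : TrDegOne K F) {x : F} (hx : Transcendental K x) :
    Algebra.IsAlgebraic (Algebra.adjoin K {x}) F := by
  obtain ⟨t, ht⟩ := hF
  have hindep : AlgebraicIndependent K fun _ : Unit ↦ x :=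
    algebraicIndependent_unique_type_iff.mpr hx
  have hbasis := hindep.isTranscendenceBasis_of_lift_trdeg_le_of_finite
    ht.lift_cardinalMk_eq_trdeg.symm.le
  have halg := hbasis.isAlgebraic
  rwa [Set.range_const] at halg

lemma TrDegOne.exists_algHom_extending {K R L M : Type*} [Field K] [CommRing R]
    [IsDomain R] [IsIntegrallyClosed R] [Field L] [Field M] [Algebra K R] [Algebra K L]
    [Algebra K M] [Algebra R L] [IsScalarTower K R L] [IsFractionRing R L]
    {F : IntermediateField K L} (hF : TrDegOne K F) (ψ : R →ₐ[K] M) {p : R}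
    (hp : Transcendental K (ψ p)) (hpF : algebraMap R L p ∈ F) :
    ∃ φ : F →ₐ[K] M, φ ⟨algebraMap R L p, hpF⟩ = ψ p := by
  set P : F := ⟨algebraMap R L p, hpF⟩
  have hP : Transcendental K P := by
    have hpR : Transcendental K p := fun h ↦ hp (h.algHom ψ)
    have hpL := (transcendental_algebraMap_iff (IsFractionRing.injective R L)).mpr hpR
    exact fun h ↦ hpL (h.algHom F.val)
  let _ : Algebra K[X] R := (Polynomial.aeval p).toAlgebra
  let _ : Algebra K[X] L := (Polynomial.aeval (algebraMap R L p)).toAlgebra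
  have : IsScalarTower K[X] R L := .of_algebraMap_eq fun B ↦
    Polynomial.aeval_algebraMap_apply L p B
  have halg (x : L) (hx : x ∈ F) : IsAlgebraic K[X] x := by
    have hxP : IsAlgebraic (Algebra.adjoin K {P}) x :=
      ((hF.isAlgebraic_adjoin hP).isAlgebraic ⟨x, hx⟩).algebraMap (A := L)
    let e := Polynomial.algEquivOfTranscendental K P hP
    exact hxP.of_ringHom_of_comp_eq e (RingHom.id L) e.surjective Function.injective_id <|
      RingHom.ext fun B ↦ (Polynomial.aeval_algebraMap_apply L
        (⟨P, Algebra.self_mem_adjoin_singleton K P⟩ : Algebra.adjoin K {P}) B).symm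
  have hinj (B : K[X]) (hB : ψ (Polynomial.aeval p B) = 0) : B = 0 :=
    transcendental_iff.mp hp B (by rwa [Polynomial.aeval_algHom_apply])
  obtain ⟨φ, hφ⟩ := exists_algHom_extending_of_isAlgebraic F.toSubalgebra halg ψ hinj
  exact ⟨φ, hφ p hpF⟩

lemma adjoin_simple_inv_sub_algebraMap {K F : Type*} [Field K] [Field F] [Algebra K F] (f : F)
    (c : K) :
    K⟮(f - algebraMap K F c)⁻¹⟯ = K⟮f⟯ := by
  refine le_antisymm ?_ ?_ <;> rw [IntermediateField.adjoin_simple_le_iff]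
  · exact inv_mem (sub_mem (IntermediateField.mem_adjoin_simple_self K f) (algebraMap_mem _ c))
  · simpa using add_mem (inv_mem (IntermediateField.mem_adjoin_simple_self K
      (f - algebraMap K F c)⁻¹)) (algebraMap_mem _ c)

section Valuation

variable {K F Γ : Type*} [Field K] [Field F] [Algebra K F] [LinearOrderedCommGroupWithZero Γ]
  (v : Valuation F Γ) [v.IsTrivialOn K]

lemma valuation_aeval_lt_valuation_aeval_iff {f : F} (hf : 1 < v f) {A B : K[X]} :
    v (Polynomial.aeval f B) < v (Polynomial.aeval f A) ↔ B.degree < A.degree := by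
  have hv {C : K[X]} (hC : C ≠ 0) : v (Polynomial.aeval f C) = v f ^ C.natDegree :=
    Polynomial.valuation_aeval_eq_valuation_X_pow_natDegree_of_one_lt_valuation_X f hf hC
  rcases eq_or_ne A 0 with rfl | hA
  · simp
  rcases eq_or_ne B 0 with rfl | hB
  · simp [hv hA, bot_lt_iff_ne_bot, hA, pow_pos (zero_lt_one.trans hf)]
  · rw [hv hA, hv hB, pow_lt_pow_iff_right₀ hf, Polynomial.natDegree_lt_natDegree_iff hB]

lemma exists_degree_lt_mul_aeval_eq_aeval {f P : F} (hf : 1 < v f) (hP : 1 < v P)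
    (hPf : P ∈ K⟮f⟯) :
    ∃ A B : K[X], B.degree < A.degree ∧ P * Polynomial.aeval f B = Polynomial.aeval f A := by
  obtain ⟨A, B, rfl⟩ := (IntermediateField.mem_adjoin_simple_iff K P).mp hPf
  have hB : Polynomial.aeval f B ≠ 0 := fun h ↦ by simp [h] at hP
  have hvB : 0 < v (Polynomial.aeval f B) := zero_lt_iff.mpr ((v.ne_zero_iff).mpr hB)
  refine ⟨A, B, (valuation_aeval_lt_valuation_aeval_iff v hf).mp ?_, div_mul_cancel₀ _ hB⟩
  rwa [map_div₀, one_lt_div₀ hvB] at hP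

lemma exists_adjoin_simple_eq_top_one_lt_valuation
    (hv : ∀ x : F, v x ≤ 1 → ∃ c : K, v (x - algebraMap K F c) < 1) {f : F} (hf : K⟮f⟯ = ⊤)
    {P : F} (hP : 1 < v P) : ∃ g : F, K⟮g⟯ = ⊤ ∧ 1 < v g := by
  rcases lt_or_ge 1 (v f) with hvf | hvf
  · exact ⟨f, hf, hvf⟩
  obtain ⟨c, hc⟩ := hv f hvf
  have hne : f - algebraMap K F c ≠ 0 := by
    intro h
    have hbot : (⊥ : IntermediateField K F) = ⊤ := by
      rw [← hf, eq_comm, IntermediateField.adjoin_simple_eq_bot_iff, sub_eq_zero.mp h]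
      exact algebraMap_mem _ c
    obtain ⟨a, rfl⟩ := IntermediateField.mem_bot.mp (hbot ▸ IntermediateField.mem_top : P ∈ ⊥)
    exact hP.not_ge (Valuation.IsTrivialOn.valuation_algebraMap_le_one v a)
  refine ⟨(f - algebraMap K F c)⁻¹, ?_, ?_⟩
  · rw [adjoin_simple_inv_sub_algebraMap, hf]
  · rwa [map_inv₀, one_lt_inv₀ (zero_lt_iff.mpr (v.ne_zero_iff.mpr hne))]

end Valuation

section Infinity

variable {K : Type*} [Field K] [DecidableEq (RatFunc K)]

lemma inftyValuation_algebraMap_lt_iff {p q : K[X]} :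
    RatFunc.inftyValuation K (algebraMap K[X] (RatFunc K) p) <
      RatFunc.inftyValuation K (algebraMap K[X] (RatFunc K) q) ↔ p.degree < q.degree := by
  have hX : 1 < RatFunc.inftyValuation K (RatFunc.X : RatFunc K) := by
    rw [RatFunc.inftyValuation.X, ← WithZero.exp_zero, WithZero.exp_lt_exp]
    exact zero_lt_one
  simpa only [RatFunc.aeval_X_left_eq_algebraMap] using
    valuation_aeval_lt_valuation_aeval_iff (RatFunc.inftyValuation K) hX (A := q) (B := p)

lemma exists_inftyValuation_sub_C_lt_one {g : RatFunc K} (hg : RatFunc.inftyValuation K g ≤ 1) :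
    ∃ c : K, RatFunc.inftyValuation K (g - RatFunc.C c) < 1 := by
  have hdenom : algebraMap K[X] (RatFunc K) g.denom ≠ 0 :=
    RatFunc.algebraMap_ne_zero g.denom_ne_zero
  have hv : 0 < RatFunc.inftyValuation K (algebraMap K[X] (RatFunc K) g.denom) := by
    rwa [zero_lt_iff, Valuation.ne_zero_iff]
  have hdeg : g.num.degree ≤ g.denom.degree := by
    rw [← not_lt, ← inftyValuation_algebraMap_lt_iff, not_lt]
    rwa [← RatFunc.num_div_denom g, map_div₀, div_le_one₀ hv] at hg
  have hquot : (g.num /ₘ g.denom).natDegree = 0 := by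
    rw [Polynomial.natDegree_divByMonic _ g.monic_denom]
    exact tsub_eq_zero_iff_le.mpr (Polynomial.natDegree_le_natDegree hdeg)
  obtain ⟨c, hc⟩ := Polynomial.natDegree_eq_zero.mp hquot
  have hsub : g - RatFunc.C c = algebraMap K[X] (RatFunc K) (g.num %ₘ g.denom) /
      algebraMap K[X] (RatFunc K) g.denom := by
    rw [Polynomial.modByMonic_eq_sub_mul_div, ← hc, map_sub, map_mul, RatFunc.algebraMap_C,
      sub_div, RatFunc.num_div_denom, mul_div_cancel_left₀ _ hdenom]
  refine ⟨c, ?_⟩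
  rw [hsub, map_div₀, div_lt_one₀ hv, inftyValuation_algebraMap_lt_iff]
  exact Polynomial.degree_modByMonic_lt _ g.monic_denom

end Infinity

lemma exists_adjoin_simple_eq_top_of_algHom_ratFunc_s13 {K F : Type*} [Field K] [Field F] [Algebra K F]
    (φ : F →ₐ[K] RatFunc K) : ∃ f : F, K⟮f⟯ = ⊤ := by
  obtain ⟨f, hf⟩ : RatFunc.Luroth.generator φ.fieldRange ∈ φ.fieldRange :=
    RatFunc.Luroth.generator_mem
  refine ⟨f, IntermediateField.map_injective φ ?_⟩
  rw [IntermediateField.adjoin_map, Set.image_singleton, ← AlgHom.fieldRange_eq_map]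
  calc K⟮φ f⟯ = K⟮RatFunc.Luroth.generator φ.fieldRange⟯ := congrArg (fun g ↦ K⟮g⟯) hf
    _ = φ.fieldRange := RatFunc.Luroth.eq_adjoin_generator.symm

lemma exists_adjoin_simple_eq_top_mul_aeval_eq_aeval {K F : Type*} [Field K] [Field F] [Algebra K F]
    [DecidableEq (RatFunc K)] (φ : F →ₐ[K] RatFunc K) {P : F}
    (hP : 1 < RatFunc.inftyValuation K (φ P)) :
    ∃ f : F, K⟮f⟯ = ⊤ ∧ ∃ A B : K[X], B.degree < A.degree ∧
      P * Polynomial.aeval f B = Polynomial.aeval f A := by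
  let v := (RatFunc.inftyValuation K).comap (φ : F →+* RatFunc K)
  have : v.IsTrivialOn K := ⟨fun a ha ↦ by
    simpa [v] using Valuation.IsTrivialOn.eq_one (v := RatFunc.inftyValuation K) a ha⟩
  have hresidue (x : F) (hx : v x ≤ 1) : ∃ c : K, v (x - algebraMap K F c) < 1 := by
    simpa [v, RatFunc.algebraMap_eq_C] using exists_inftyValuation_sub_C_lt_one hx
  obtain ⟨f, hf⟩ := exists_adjoin_simple_eq_top_of_algHom_ratFunc_s13 φ
  obtain ⟨g, hg, hvg⟩ := exists_adjoin_simple_eq_top_one_lt_valuation v hresidue hf (P := P) hP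
  exact ⟨g, hg, exists_degree_lt_mul_aeval_eq_aeval v hvg hP (hg ▸ IntermediateField.mem_top)⟩

theorem TrDegOne.exists_eq_adjoin_algebraMap {K R L : Type*} [Field K] [CommRing R] [IsDomain R]
    [IsIntegrallyClosed R] [Field L] [Algebra K R] [Algebra K L] [Algebra R L]
    [IsScalarTower K R L] [IsFractionRing R L] [DecidableEq (RatFunc K)]
    {F : IntermediateField K L} (hF : TrDegOne K F) (ψ : R →ₐ[K] RatFunc K) {p : R}
    (hp : 1 < RatFunc.inftyValuation K (ψ p)) (hpF : algebraMap R L p ∈ F) :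
    ∃ q : R, F = K⟮algebraMap R L q⟯ := by
  have hψp : Transcendental K (ψ p) :=
    Valuation.transcendental_of_ne_one K (v := RatFunc.inftyValuation K) (ψ p)
      (fun h ↦ by simp [h] at hp) hp.ne'
  obtain ⟨φ, hφ⟩ := hF.exists_algHom_extending ψ hψp hpF
  obtain ⟨f, hf, A, B, hBA, hAB⟩ := exists_adjoin_simple_eq_top_mul_aeval_eq_aeval φ (hφ ▸ hp)
  have hint : IsIntegral R (f : L) := by
    refine isIntegral_of_algebraMap_mul_aeval_eq_aeval hBA (p := p) ?_
    simpa [← Polynomial.aeval_algHom_apply] using congrArg F.val hAB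
  obtain ⟨q, hq⟩ := IsIntegrallyClosed.isIntegral_iff.mp hint
  refine ⟨q, ?_⟩
  rw [hq, ← IntermediateField.lift_adjoin_simple, hf, IntermediateField.lift_top]

lemma exists_algHom_polynomial_natDegree_pos {σ R : Type*} [CommRing R] [IsDomain R]
    {p : MvPolynomial σ R} (hp : 0 < p.totalDegree) :
    ∃ ψ : MvPolynomial σ R →ₐ[R] R[X], 0 < (ψ p).natDegree := by
  -- Otherwise `p` agrees with its constant term on the infinite grid of points with coordinates
  -- in `T R[T]`, since a constant polynomial is determined by its value at `T = 0`.
  by_contra! hconst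
  let T : Set R[X] := Set.range fun a ↦ Polynomial.X * a
  have hT : T.Infinite :=
    Set.infinite_range_of_injective (mul_right_injective₀ Polynomial.X_ne_zero)
  have hmap : map Polynomial.C p = map Polynomial.C (C (constantCoeff p)) := by
    refine funext_set (fun _ ↦ T) (fun _ ↦ hT) fun x hx ↦ ?_
    have hx0 : (fun i ↦ Polynomial.aeval (0 : R) (x i)) = 0 := funext fun i ↦ by
      obtain ⟨a, ha⟩ := hx i (Set.mem_univ i)
      simp [← ha]
    have hcoeff : (aeval x p).coeff 0 = constantCoeff p := by
      rw [Polynomial.coeff_zero_eq_aeval_zero, comp_aeval_apply, hx0, aeval_zero,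
        Algebra.algebraMap_self_apply]
    have hp_const : aeval x p = Polynomial.C (constantCoeff p) :=
      hcoeff ▸ Polynomial.eq_C_of_natDegree_eq_zero (Nat.le_zero.mp (hconst (aeval x)))
    rwa [map_C, eval_C, eval_map, ← Polynomial.algebraMap_eq, ← aeval_def]
  rw [map_injective _ Polynomial.C_injective hmap, totalDegree_C] at hp
  exact hp.false

theorem luroth_polynomial_generator_general {K σ L : Type*} [Field K] [Field L]
    [Algebra K L] [Algebra (MvPolynomial σ K) L] [IsScalarTower K (MvPolynomial σ K) L]
    [IsFractionRing (MvPolynomial σ K) L] (F : IntermediateField K L) (hF : TrDegOne K F)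
    (p : MvPolynomial σ K) (hp : 0 < p.totalDegree)
    (hpF : algebraMap (MvPolynomial σ K) L p ∈ F) :
    ∃ q : MvPolynomial σ K, F = K⟮algebraMap (MvPolynomial σ K) L q⟯ := by
  classical
  obtain ⟨ψ, hψ⟩ := exists_algHom_polynomial_natDegree_pos hp
  refine hF.exists_eq_adjoin_algebraMap ((IsScalarTower.toAlgHom K K[X] (RatFunc K)).comp ψ) ?_ hpF
  have hdeg : (1 : K[X]).degree < (ψ p).degree := by
    rw [Polynomial.degree_one]
    exact Polynomial.natDegree_pos_iff_degree_pos.mp hψ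
  simpa using inftyValuation_algebraMap_lt_iff.mpr hdeg

/-- If `K ⊆ F ⊆ K(x₁,…,xₙ)` has transcendence degree 1 over `K` and
`F` contains a non-constant polynomial, then `F` is generated over `K` by a
polynomial: `F = K(q)` for some `q ∈ K[x₁,…,xₙ]`. -/
theorem luroth_polynomial_generator
    {K : Type*} [Field K] {n : ℕ}
    (F : IntermediateField K (FractionRing (MvPolynomial (Fin n) K)))
    (hF : TrDegOne K F)
    (p : MvPolynomial (Fin n) K) (hp : 0 < p.totalDegree)
    (hpF : algebraMap (MvPolynomial (Fin n) K) (FractionRing (MvPolynomial (Fin n) K)) p ∈ F) :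
    ∃ q : MvPolynomial (Fin n) K,
      F = IntermediateField.adjoin K
        {algebraMap (MvPolynomial (Fin n) K) (FractionRing (MvPolynomial (Fin n) K)) q} :=
  luroth_polynomial_generator_general F hF p hp hpF
end
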